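/- arXiv:cs/0104003 — 2 statements merged into one kernel-verified Lean document; each statement's English description precedes it below -/
import Mathlib

section
/- Moded-to-chain transformation: Let C be a moded clause p(t₀,tₙ′) ← q₁(t₀′,t₁), q₂(t₁′,t₂), …, qₙ(t_{n-1}′,tₙ) (n ≥ 0), and for j = 0,…,n+1 let Πⱼ = (var(t₀) ∪ ⋯ ∪ var(t_{j-1})) ∩ (var(tⱼ′) ∪ ⋯ ∪ var(tₙ′)). Let Σⱼ be the list [X₁,ⱼ,…,X_{dⱼ},ⱼ | St] where {X₁,ⱼ,…,X_{dⱼ},ⱼ} = Πⱼ if Πⱼ ≠ ∅, and Σⱼ = St if Πⱼ = ∅. Then the chain clause Ĉ: p̂(U₀,Uₙ′) ← h₀(U₀,U₀′), q̂₁(U₀′,U₁), h₁(U₁,U₁′), q̂₂(U₁′,U₂), …, q̂ₙ(U_{n-1}′,Uₙ), hₙ(Uₙ,Uₙ′) (with the Uᵢ, Uᵢ′ distinct variables) is logically implied by: C, the standard equality theory for C, the 'iff' version of function substitutivity for the list constructor ([X|Y]=[X′|Y′] ↔ X=X′ ∧ Y=Y′), and the completed ('iff') definitions of p̂(⟨St|X⟩,⟨St|Y⟩)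 ← p(X,Y), of q̂ⱼ(⟨St|X⟩,⟨St|Y⟩) ← qⱼ(X,Y) for j = 1,…,n, and of hⱼ(⟨Σⱼ|tⱼ⟩,⟨Σ_{j+1}|tⱼ′⟩) ← for j = 0,…,n (writing t₀′ also as t₀ position-wise, i.e., h₀ maps ⟨St|t₀⟩ to ⟨Σ₁|t₀′⟩ and hₙ maps ⟨Σₙ|tₙ⟩ to ⟨St|tₙ′⟩), where p̂, the q̂ⱼ and the hⱼ are predicate symbols not occurring in C. -/
namespace ModedChain

/-- First-order terms over function symbols `F` (with arities `ar`), a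
distinguished binary list constructor `cons` (written `[·|·]`), and variables
`V`. -/
inductive Tm (F : Type) (ar : F → ℕ) (V : Type) : Type
  | var : V → Tm F ar V
  | fn : (f : F) → (Fin (ar f) → Tm F ar V) → Tm F ar V
  | cons : Tm F ar V → Tm F ar V → Tm F ar V

/-- A structure interpreting the function symbols, the list constructor, and the
distinguished binary equality predicate. -/
structure Struc (F : Type) (ar : F → ℕ) where
  D : Type
  nonempty : Nonempty D
  fnI : (f : F) → (Fin (ar f) → D) → D
  consI : D → D → D
  eqI : D → D → Prop

variable {F V : Type} {ar : F → ℕ}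

def Tm.eval (M : Struc F ar) (v : V → M.D) : Tm F ar V → M.D
  | .var x => v x
  | .fn f args => M.fnI f fun i => (args i).eval M v
  | .cons s t => M.consI (s.eval M v) (t.eval M v)

/-- The variable `x` occurs in the term. -/
def Tm.varOccurs (x : V) : Tm F ar V → Prop
  | .var y => x = y
  | .fn _ args => ∃ i, (args i).varOccurs x
  | .cons s t => s.varOccurs x ∨ t.varOccurs x

/-- The function symbol `g` occurs in the term. -/
def Tm.fnOccurs (g : F) : Tm F ar V → Prop
  | .var _ => False
  | .fn f args => g = f ∨ ∃ i, (args i).fnOccurs g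
  | .cons s t => s.fnOccurs g ∨ t.fnOccurs g

/-- The list constructor occurs in the term. -/
def Tm.consOccurs : Tm F ar V → Prop
  | .var _ => False
  | .fn _ args => ∃ i, (args i).consOccurs
  | .cons _ _ => True

/-- The term `[X₁,…,X_d | St]`. -/
def stackList (L : List V) (St : V) : Tm F ar V :=
  L.foldr (fun z acc => Tm.cons (Tm.var z) acc) (Tm.var St)

theorem eval_congr_eq (M : Struc F ar) (s : Tm F ar V) (v w : V → M.D)
    (h : ∀ x, s.varOccurs x → v x = w x) : s.eval M v = s.eval M w := by
  induction s with
  | var y => exact h y rfl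
  | fn f args ih =>
    simp only [Tm.eval]
    congr 1
    funext i
    exact ih i (fun x hx => h x ⟨i, hx⟩)
  | cons a b iha ihb =>
    simp only [Tm.eval]
    rw [iha (fun x hx => h x (Or.inl hx)), ihb (fun x hx => h x (Or.inr hx))]

theorem eval_congr_eqI (M : Struc F ar)
    (hconsiff : ∀ a b a' b' : M.D,
      M.eqI (M.consI a b) (M.consI a' b') ↔ (M.eqI a a' ∧ M.eqI b b'))
    (s : Tm F ar V)
    (hfn : ∀ f : F, s.fnOccurs f →
      ∀ a b : Fin (ar f) → M.D, (∀ i, M.eqI (a i) (b i)) →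
        M.eqI (M.fnI f a) (M.fnI f b))
    (v w : V → M.D)
    (h : ∀ x, s.varOccurs x → M.eqI (v x) (w x)) : M.eqI (s.eval M v) (s.eval M w) := by
  induction s with
  | var y => exact h y rfl
  | fn f args ih =>
    simp only [Tm.eval]
    exact hfn f (Or.inl rfl) _ _ (fun i =>
      ih i (fun g hg => hfn g (Or.inr ⟨i, hg⟩)) (fun x hx => h x ⟨i, hx⟩))
  | cons a b iha ihb =>
    simp only [Tm.eval]
    exact (hconsiff _ _ _ _).2
      ⟨iha (fun g hg => hfn g (Or.inl hg)) (fun x hx => h x (Or.inl hx)),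
       ihb (fun g hg => hfn g (Or.inr hg)) (fun x hx => h x (Or.inr hx))⟩

theorem stackList_agree (M : Struc F ar)
    (hconsiff : ∀ a b a' b' : M.D,
      M.eqI (M.consI a b) (M.consI a' b') ↔ (M.eqI a a' ∧ M.eqI b b'))
    (L : List V) (St : V) (v w : V → M.D)
    (h : M.eqI ((stackList L St : Tm F ar V).eval M v) ((stackList L St : Tm F ar V).eval M w)) :
    M.eqI (v St) (w St) ∧ ∀ x ∈ L, M.eqI (v x) (w x) := by
  induction L with
  | nil => exact ⟨h, by simp⟩
  | cons a L ih =>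
    have h2 := (hconsiff _ _ _ _).1 h
    obtain ⟨h3, h4⟩ := ih h2.2
    refine ⟨h3, fun x hx => ?_⟩
    rcases List.mem_cons.1 hx with rfl | hx
    · exact h2.1
    · exact h4 x hx

/-- **Moded-to-chain transformation.**  Let `C` be the moded clause
`p(t₀,tₙ′) ← q₁(t₀′,t₁), …, qₙ(t_{n-1}′,tₙ)` (`n ≥ 0`), let
`Πⱼ = (var(t₀) ∪ ⋯ ∪ var(t_{j-1})) ∩ (var(tⱼ′) ∪ ⋯ ∪ var(tₙ′))` and let `Σⱼ` be a
list `[X₁,…,X_d | St]` of the variables of `Πⱼ` followed by the (fresh) stack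
variable `St` (so `Σⱼ = St` when `Πⱼ = ∅`).  Then the chain clause `Ĉ`:
`p̂(U₀,Uₙ′) ← h₀(U₀,U₀′), q̂₁(U₀′,U₁), h₁(U₁,U₁′), …, q̂ₙ(U_{n-1}′,Uₙ), hₙ(Uₙ,Uₙ′)`
is logically implied by `C`, the standard equality theory for `C`, the «iff»
version of function substitutivity for the list constructor, and the completed
(«iff») definitions of `p̂(⟨St|X⟩,⟨St|Y⟩) ← p(X,Y)`, of
`q̂ⱼ(⟨St|X⟩,⟨St|Y⟩) ← qⱼ(X,Y)`, and of the unit clauses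
`hⱼ(⟨Σⱼ|tⱼ⟩,⟨Σ_{j+1}|tⱼ′⟩) ←`, where `p̂`, the `q̂ⱼ` and the `hⱼ` are (fresh)
predicate symbols not occurring in `C` (here interpreted by relations
`phatI, qhatI, hI` distinct from the interpretations `pI, qI` of `p, qⱼ`). -/
theorem moded_to_chain
    (F V : Type) (ar : F → ℕ) (n : ℕ)
    (t t' : Fin (n + 1) → Tm F ar V)
    -- the clause is moded:
    (hmoded1 : ∀ i : Fin (n + 1), ∀ x : V, (t' i).varOccurs x →
        ∃ k : Fin (n + 1), k ≤ i ∧ (t k).varOccurs x)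
    (hmoded2 : ∀ i j : Fin (n + 1), i ≠ j →
        ∀ x : V, ¬((t i).varOccurs x ∧ (t j).varOccurs x))
    -- the fresh stack variable:
    (St : V)
    (hSt : ∀ i : Fin (n + 1), ¬ (t i).varOccurs St ∧ ¬ (t' i).varOccurs St)
    -- the pass-on sets Πⱼ:
    (Pi : Fin (n + 2) → Set V)
    (hPi : ∀ j : Fin (n + 2), Pi j =
      {x | (∃ i : Fin (n + 1), (i : ℕ) < (j : ℕ) ∧ (t i).varOccurs x) ∧
           (∃ k : Fin (n + 1), (j : ℕ) ≤ (k : ℕ) ∧ (t' k).varOccurs x)})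
    -- the terms Σⱼ = [X₁,…,X_d | St] with {X₁,…,X_d} = Πⱼ:
    (Sg : Fin (n + 2) → Tm F ar V)
    (hSg : ∀ j : Fin (n + 2), ∃ L : List V, L.Nodup ∧
      (∀ x : V, x ∈ L ↔ x ∈ Pi j) ∧ Sg j = stackList L St)
    -- a structure (with fresh interpretations for p̂, q̂ⱼ, hⱼ):
    (M : Struc F ar)
    (pI : M.D → M.D → Prop) (qI : Fin n → M.D → M.D → Prop)
    (phatI : M.D → M.D → Prop) (qhatI : Fin n → M.D → M.D → Prop)
    (hI : Fin (n + 1) → M.D → M.D → Prop)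
    -- M satisfies C:
    (hC : ∀ v : V → M.D,
      (∀ j : Fin n, qI j ((t' j.castSucc).eval M v) ((t j.succ).eval M v)) →
      pI ((t 0).eval M v) ((t' (Fin.last n)).eval M v))
    -- M satisfies the standard equality theory for C:
    (hrefl : ∀ d : M.D, M.eqI d d)
    (hsymm : ∀ d e : M.D, M.eqI e d → M.eqI d e)
    (htrans : ∀ c d e : M.D, M.eqI c d → M.eqI d e → M.eqI c e)
    (hfnsub : ∀ f : F, (∃ i : Fin (n + 1), (t i).fnOccurs f ∨ (t' i).fnOccurs f) →
      ∀ a b : Fin (ar f) → M.D, (∀ i, M.eqI (a i) (b i)) →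
        M.eqI (M.fnI f a) (M.fnI f b))
    (hconssub : (∃ i : Fin (n + 1), (t i).consOccurs ∨ (t' i).consOccurs) →
      ∀ a b a' b' : M.D, M.eqI a a' → M.eqI b b' →
        M.eqI (M.consI a b) (M.consI a' b'))
    (hpsub : ∀ x₁ x₂ y₁ y₂ : M.D, M.eqI x₁ y₁ → M.eqI x₂ y₂ →
      pI y₁ y₂ → pI x₁ x₂)
    (hqsub : ∀ j : Fin n, ∀ x₁ x₂ y₁ y₂ : M.D, M.eqI x₁ y₁ → M.eqI x₂ y₂ →
      qI j y₁ y₂ → qI j x₁ x₂)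
    -- M satisfies the «iff» version of function substitutivity for cons:
    (hconsiff : ∀ a b a' b' : M.D,
      M.eqI (M.consI a b) (M.consI a' b') ↔ (M.eqI a a' ∧ M.eqI b b'))
    -- M satisfies the completed definitions of p̂, the q̂ⱼ and the hⱼ:
    (hphat : ∀ z z' : M.D, phatI z z' ↔
      ∃ st x y : M.D, M.eqI z (M.consI st x) ∧ M.eqI z' (M.consI st y) ∧ pI x y)
    (hqhat : ∀ j : Fin n, ∀ z z' : M.D, qhatI j z z' ↔
      ∃ st x y : M.D, M.eqI z (M.consI st x) ∧ M.eqI z' (M.consI st y) ∧ qI j x y)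
    (hh : ∀ j : Fin (n + 1), ∀ z z' : M.D, hI j z z' ↔
      ∃ v : V → M.D,
        M.eqI z ((Tm.cons (Sg j.castSucc) (t j)).eval M v) ∧
        M.eqI z' ((Tm.cons (Sg j.succ) (t' j)).eval M v)) :
    -- then M satisfies the chain clause Ĉ:
    ∀ u u' : Fin (n + 1) → M.D,
      (∀ j : Fin (n + 1), hI j (u j) (u' j)) →
      (∀ j : Fin n, qhatI j (u' j.castSucc) (u j.succ)) →
      phatI (u 0) (u' (Fin.last n)) := by
  classical
  intro u u' hhu hqu
  choose w hw hw' using fun j => (hh j _ _).1 (hhu j)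
  have key : ∀ j : Fin n,
      M.eqI ((Sg j.castSucc.succ).eval M (w j.castSucc))
        ((Sg j.castSucc.succ).eval M (w j.succ)) ∧
      qI j ((t' j.castSucc).eval M (w j.castSucc)) ((t j.succ).eval M (w j.succ)) := by
    intro j
    obtain ⟨st, x, y, h1, h2, h3⟩ := (hqhat j _ _).1 (hqu j)
    have a1 := (hconsiff _ _ _ _).1 (htrans _ _ _ (hsymm _ _ (hw' j.castSucc)) h1)
    have a2 := (hconsiff _ _ _ _).1 (htrans _ _ _ (hsymm _ _ (hw j.succ)) h2)
    have e : j.succ.castSucc = j.castSucc.succ := rfl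
    rw [e] at a2
    exact ⟨htrans _ _ _ a1.1 (hsymm _ _ a2.1), hqsub j _ _ _ _ a1.2 a2.2 h3⟩
  have step : ∀ j : Fin n, M.eqI (w j.castSucc St) (w j.succ St) ∧
      ∀ x ∈ Pi j.castSucc.succ, M.eqI (w j.castSucc x) (w j.succ x) := by
    intro j
    obtain ⟨L, -, hL, hS⟩ := hSg j.castSucc.succ
    have h := (key j).1
    rw [hS] at h
    have h2 := stackList_agree M hconsiff L St _ _ h
    exact ⟨h2.1, fun x hx => h2.2 x ((hL x).2 hx)⟩
  have stAll : ∀ i : Fin (n + 1), M.eqI (w 0 St) (w i St) := by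
    intro i
    induction i using Fin.induction with
    | zero => exact hrefl _
    | succ j ih => exact htrans _ _ _ ih (step j).1
  have chain : ∀ (x : V) (k i : Fin (n + 1)), (t k).varOccurs x → (t' i).varOccurs x →
      ∀ m : Fin (n + 1), k ≤ m → m ≤ i → M.eqI (w k x) (w m x) := by
    intro x k i hk hi m
    induction m using Fin.induction with
    | zero =>
      intro h1 _
      have : k = 0 := le_antisymm h1 (Fin.zero_le _)
      rw [this]
      exact hrefl _
    | succ j ih =>
      intro h1 h2
      rcases eq_or_lt_of_le h1 with h | h
      · rw [h]
        exact hrefl _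
      · have hk' : (k : ℕ) < j + 1 := by simpa [Fin.lt_def] using h
        have hi' : (j : ℕ) + 1 ≤ i := by simpa [Fin.le_def] using h2
        refine htrans _ _ _ (ih ?_ ?_) ((step j).2 x ?_)
        · rw [Fin.le_def]
          simp only [Fin.val_castSucc]
          omega
        · rw [Fin.le_def]
          simp only [Fin.val_castSucc]
          omega
        · rw [hPi]
          refine ⟨⟨k, ?_, hk⟩, ⟨i, ?_, hi⟩⟩
          · simpa using hk'
          · simpa using hi'
  let v : V → M.D := fun x =>
    if h : ∃ k : Fin (n + 1), (t k).varOccurs x then w h.choose x else w 0 x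
  have hv : ∀ k x, (t k).varOccurs x → v x = w k x := by
    intro k x hx
    have h : ∃ k : Fin (n + 1), (t k).varOccurs x := ⟨k, hx⟩
    have e : h.choose = k := by
      by_contra hne
      exact hmoded2 _ _ hne x ⟨h.choose_spec, hx⟩
    simp only [v, dif_pos h, e]
  have ht : ∀ i, (t i).eval M v = (t i).eval M (w i) := fun i =>
    eval_congr_eq M _ _ _ (hv i)
  have ht' : ∀ i, M.eqI ((t' i).eval M v) ((t' i).eval M (w i)) := by
    intro i
    refine eval_congr_eqI M hconsiff _ (fun f hf => hfnsub f ⟨i, Or.inr hf⟩) _ _ ?_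
    intro x hx
    obtain ⟨k, hki, hk⟩ := hmoded1 i x hx
    rw [hv k x hk]
    exact chain x k i hk hx i hki le_rfl
  have hp := hC v (fun j => by
    refine hqsub j _ _ _ _ (ht' _) ?_ (key j).2
    rw [ht]
    exact hrefl _)
  have sgEnd : ∀ j : Fin (n + 2), ((j : ℕ) = 0 ∨ (j : ℕ) = n + 1) → Sg j = Tm.var St := by
    intro j hj
    obtain ⟨L, -, hL, hS⟩ := hSg j
    have : L = [] := by
      apply List.eq_nil_iff_forall_not_mem.2
      intro x hx
      have h := (hL x).1 hx
      rw [hPi] at h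
      obtain ⟨⟨i, hi, -⟩, ⟨k, hk, -⟩⟩ := h
      omega
    rw [hS, this]
    rfl
  have h0 := hw 0
  have hn := hw' (Fin.last n)
  rw [sgEnd _ (Or.inl (by simp))] at h0
  rw [sgEnd _ (Or.inr (by simp))] at hn
  refine (hphat _ _).2 ⟨w 0 St, (t 0).eval M v, (t' (Fin.last n)).eval M v, ?_, ?_, hp⟩
  · rw [ht]
    exact h0
  · exact htrans _ _ _ hn ((hconsiff _ _ _ _).2
      ⟨hsymm _ _ (stAll _), hsymm _ _ (ht' _)⟩)

end ModedChain
end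

section
/- G-chain property of the moded transformation (variable-set form): Let V₀,…,Vₙ and W₀,…,Wₙ be sets (of variables) such that Wᵢ ⊆ V₀ ∪ ⋯ ∪ Vᵢ for every i = 0,…,n, and Vᵢ ∩ Vⱼ = ∅ for all i ≠ j. For j = 0,…,n+1 define Πⱼ = (V₀ ∪ ⋯ ∪ V_{j-1}) ∩ (Wⱼ ∪ ⋯ ∪ Wₙ) (with the empty union equal to ∅, so Π₀ = ∅ and Π_{n+1} = ∅). Then Π_{j+1} ∪ Wⱼ ⊆ Πⱼ ∪ Vⱼ for every j = 0,…,n. Consequently, in the chain form of a moded clause every unit clause hⱼ(⟨Σⱼ|tⱼ⟩,⟨Σ_{j+1}|tⱼ′⟩) ← satisfies var(output) ⊆ var(input), i.e., the chain form of a moded program is a G-chain program. -/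
/-- **G-chain property of the moded transformation (variable-set form).**
Let `V₀,…,Vₙ` and `W₀,…,Wₙ` be sets of variables with `Wᵢ ⊆ V₀ ∪ ⋯ ∪ Vᵢ` for all
`i` and the `Vᵢ` pairwise disjoint.  For `j = 0,…,n+1` let
`Πⱼ = (V₀ ∪ ⋯ ∪ V_{j-1}) ∩ (Wⱼ ∪ ⋯ ∪ Wₙ)` (empty unions being `∅`).  Then
`Π_{j+1} ∪ Wⱼ ⊆ Πⱼ ∪ Vⱼ` for every `j = 0,…,n`; i.e. in the chain form of a moded
clause every unit clause `hⱼ(⟨Σⱼ|tⱼ⟩,⟨Σ_{j+1}|tⱼ′⟩) ←` satisfies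
`var(output) ⊆ var(input)`, so the chain form of a moded program is a G-chain
program. -/
theorem gchain_property_of_moded_transformation
    (α : Type*) (n : ℕ) (V W : Fin (n + 1) → Set α)
    (hW : ∀ i : Fin (n + 1), W i ⊆ ⋃ k : Fin (n + 1), ⋃ (_ : k ≤ i), V k)
    (hV : ∀ i j : Fin (n + 1), i ≠ j → V i ∩ V j = ∅)
    (Pi : Fin (n + 2) → Set α)
    (hPi : ∀ j : Fin (n + 2), Pi j =
      (⋃ i : Fin (n + 1), ⋃ (_ : (i : ℕ) < (j : ℕ)), V i) ∩
      (⋃ k : Fin (n + 1), ⋃ (_ : (j : ℕ) ≤ (k : ℕ)), W k)) :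
    ∀ j : Fin (n + 1), Pi j.succ ∪ W j ⊆ Pi j.castSucc ∪ V j := by
  intro j x hx
  rw [hPi]
  rw [hPi] at hx
  simp only [Set.mem_union, Set.mem_inter_iff, Set.mem_iUnion, Fin.val_succ,
    Fin.val_castSucc, exists_prop] at hx ⊢
  -- it suffices to find `x` in some `V i`, `i ≤ j`, and in some `W k`, `j ≤ k`
  have key : ∀ i k : Fin (n + 1), (i : ℕ) ≤ j → x ∈ V i → (j : ℕ) ≤ k → x ∈ W k →
      ((∃ i : Fin (n + 1), (i : ℕ) < j ∧ x ∈ V i) ∧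
        ∃ k : Fin (n + 1), (j : ℕ) ≤ k ∧ x ∈ W k) ∨ x ∈ V j := by
    intro i k hij hi hjk hk
    rcases Nat.lt_or_eq_of_le hij with h | h
    · exact Or.inl ⟨⟨i, h, hi⟩, ⟨k, hjk, hk⟩⟩
    · exact Or.inr (Fin.ext h ▸ hi)
  rcases hx with ⟨⟨i, hij, hi⟩, ⟨k, hjk, hk⟩⟩ | hx
  · exact key i k (by omega) hi (by omega) hk
  · have h := hW j hx
    simp only [Set.mem_iUnion, exists_prop] at h
    obtain ⟨i, hij, hi⟩ := h
    exact key i j hij hi le_rfl hx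
end
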